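/- arXiv:1405.5318 — 3 statements merged into one kernel-verified Lean document; each statement's English description precedes it below -/
import Mathlib

section
/- Third-order equation for the modified Hamiltonian: let α0,…,α4 be complex parameters with α0+α1+2α2+α3+α4 = 1, let q, p be holomorphic functions on an open set U ⊆ ℂ∖{0,1} solving the Hamiltonian system for the Painlevé VI Hamiltonian, and set h0(t) = h0(q(t),p(t),t) (the modified Hamiltonian evaluated along the solution). Write δ for the operator f ↦ t(t−1)f′(t), and set C = (α0−1)²+α1²+α3²+α4² and G(t) = (α4−α3)(α3+α4)(α0+α1−1)(α0−α1−1)t + (α3−α1)(α3+α1)(α0+α4−1)(α0−α4−1). Then on U: δ³(h0) + 2(1−2t)δ²(h0) + 6δ(h0)² + 4(1−2t)h0·δ(h0) − [((C−6)t(t−1)+C−3)/3]·δ(h0) + 2t(t−1)h0² + [Ct(t−1)(2t−1)/6]·h0 − t(t−1)G(t)/8 = 0. -/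
/-- The Painlevé VI Hamiltonian. -/
noncomputable def PVIHamiltonian (α0 α1 α2 α3 α4 q p t : ℂ) : ℂ :=
  q * (q - 1) * (q - t) * p ^ 2
    - ((α0 - 1) * q * (q - 1) + α3 * q * (q - t) + α4 * (q - 1) * (q - t)) * p
    + α2 * (α1 + α2) * (q - t)

/-- The pair `(q, p)` solves the Hamiltonian system
`t(t-1) q' = ∂H/∂p`, `t(t-1) p' = -∂H/∂q` on `U`. -/
def SolvesHamSystem (α0 α1 α2 α3 α4 : ℂ) (U : Set ℂ) (q p : ℂ → ℂ) : Prop :=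
  ∀ t ∈ U,
    t * (t - 1) * deriv q t
        = deriv (fun p' => PVIHamiltonian α0 α1 α2 α3 α4 (q t) p' t) (p t) ∧
    t * (t - 1) * deriv p t
        = - deriv (fun q' => PVIHamiltonian α0 α1 α2 α3 α4 q' (p t) t) (q t)

/-- The operator δ = t(t-1) d/dt. -/
noncomputable def delOp (f : ℂ → ℂ) : ℂ → ℂ := fun t => t * (t - 1) * deriv f t

/-- The modified Painlevé VI Hamiltonian h₀. -/
noncomputable def PVIModifiedHamiltonian (α0 α1 α2 α3 α4 q p t : ℂ) : ℂ :=
  PVIHamiltonian α0 α1 α2 α3 α4 q p t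
    + t / 12 * (2 * (α0 - 1) ^ 2 - α1 ^ 2 + 2 * α3 ^ 2 - α4 ^ 2 + 6 * (α0 - 1) * α3)
    + (t - 1) / 12 * (2 * (α0 - 1) ^ 2 - α1 ^ 2 - α3 ^ 2 + 2 * α4 ^ 2 + 6 * (α0 - 1) * α4)

/-!
The modified Hamiltonian is affine in `t`: `h₀ = E + t K`, where `E` and `K` are functions of
`(q, p)` alone. Along the flow, `δ` acts on functions of `(q, p)` as the Poisson bracket with `h₀`,
so `δ h₀ = t (t - 1) K`, `δ K = {K, E}` and `δ {K, E} = {{K, E}, E} + t {{K, E}, K}`. The functions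
`E` and `K` generate a quadratic Poisson algebra: `{{K, E}, E}` and `{{K, E}, K}` are quadratic
polynomials in `E` and `K`, whose coefficients are constants, `C` and the two coefficients of `G`.
Eliminating `E = h₀ - t K` and `K = δ h₀ / (t (t - 1))` gives the equation.
-/

open Function Topology

section DelOp

variable {f g : ℂ → ℂ} {t : ℂ}

theorem delOp_congr (hfg : f =ᶠ[𝓝 t] g) : delOp f t = delOp g t := by
  simp only [delOp, hfg.deriv_eq]

theorem delOp_add (hf : DifferentiableAt ℂ f t) (hg : DifferentiableAt ℂ g t) :
    delOp (fun s => f s + g s) t = delOp f t + delOp g t := by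
  simp only [delOp, deriv_fun_add hf hg]
  ring

theorem delOp_mul (hf : DifferentiableAt ℂ f t) (hg : DifferentiableAt ℂ g t) :
    delOp (fun s => f s * g s) t = delOp f t * g t + f t * delOp g t := by
  simp only [delOp, deriv_fun_mul hf hg]
  ring

theorem delOp_id (t : ℂ) : delOp (fun s => s) t = t * (t - 1) := by
  simp only [delOp, deriv_id'', mul_one]

theorem delOp_sub_const (f : ℂ → ℂ) (c t : ℂ) : delOp (fun s => f s - c) t = delOp f t := by
  simp only [delOp, deriv_sub_const]

theorem delOp_mul_sub_one_mul (hf : DifferentiableAt ℂ f t) :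
    delOp (fun s => s * (s - 1) * f s) t
      = t * (t - 1) * ((2 * t - 1) * f t + delOp f t) := by
  rw [delOp_mul (by fun_prop) hf, delOp_mul (by fun_prop) (by fun_prop), delOp_sub_const, delOp_id]
  ring

/-- The term `2 (1 - 2 t) δ² h` cancels everything that involves `δ k` in `δ³ h`. -/
theorem delOp_delOp_delOp_add_of_delOp_eq {U : Set ℂ} (hU : IsOpen U) {h k l : ℂ → ℂ}
    (hk : ∀ t ∈ U, DifferentiableAt ℂ k t) (hl : DifferentiableAt ℂ l t)
    (hδh : ∀ t ∈ U, delOp h t = t * (t - 1) * k t) (hδk : ∀ t ∈ U, delOp k t = l t)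
    (ht : t ∈ U) :
    delOp (delOp (delOp h)) t + 2 * (1 - 2 * t) * delOp (delOp h) t
      = t * (t - 1) * (delOp l t - (2 * t * (t - 1) + 1) * k t) := by
  have hkt := hk t ht
  have hδδh : ∀ s ∈ U, delOp (delOp h) s = s * (s - 1) * ((2 * s - 1) * k s + l s) := by
    intro s hs
    rw [delOp_congr (Filter.eventuallyEq_of_mem (hU.mem_nhds hs) hδh),
      delOp_mul_sub_one_mul (hk s hs), hδk s hs]
  have hδ_coeff : delOp (fun s => (2 * s - 1) * k s + l s) t
      = 2 * t * (t - 1) * k t + (2 * t - 1) * l t + delOp l t := by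
    have hlin : delOp (fun s => 2 * s - 1) t = 2 * t * (t - 1) := by
      simp only [delOp, deriv_sub_const, deriv_const_mul_id]
      ring
    rw [delOp_add (by fun_prop) hl, delOp_mul (by fun_prop) hkt, hlin, hδk t ht]
  rw [delOp_congr (Filter.eventuallyEq_of_mem (hU.mem_nhds ht) hδδh),
    delOp_mul_sub_one_mul (by fun_prop), hδ_coeff, hδδh t ht]
  ring

end DelOp

section ChainRule

variable {𝕜 : Type*} [NontriviallyNormedField 𝕜] {F : 𝕜 → 𝕜 → 𝕜}

theorem fderiv_uncurry_apply {x y : 𝕜} (hF : DifferentiableAt 𝕜 (uncurry F) (x, y)) (a b : 𝕜) :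
    fderiv 𝕜 (uncurry F) (x, y) (a, b) = deriv (F · y) x * a + deriv (F x) y * b := by
  have hleft : deriv (F · y) x = fderiv 𝕜 (uncurry F) (x, y) (1, 0) :=
    (HasFDerivAt.comp_hasDerivAt (f := (·, y)) x hF.hasFDerivAt
      ((hasDerivAt_id' x).prodMk (hasDerivAt_const x y))).deriv
  have hright : deriv (F x) y = fderiv 𝕜 (uncurry F) (x, y) (0, 1) :=
    (HasFDerivAt.comp_hasDerivAt (f := (x, ·)) y hF.hasFDerivAt
      ((hasDerivAt_const y x).prodMk (hasDerivAt_id' y))).deriv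
  have hab : (a, b) = a • ((1, 0) : 𝕜 × 𝕜) + b • ((0, 1) : 𝕜 × 𝕜) := by simp
  rw [hab, map_add, map_smul, map_smul, hleft, hright, smul_eq_mul, smul_eq_mul, mul_comm a,
    mul_comm b]

theorem hasDerivAt_comp₂ {u v : 𝕜 → 𝕜} {t : 𝕜}
    (hF : DifferentiableAt 𝕜 (uncurry F) (u t, v t))
    (hu : DifferentiableAt 𝕜 u t) (hv : DifferentiableAt 𝕜 v t) :
    HasDerivAt (fun s => F (u s) (v s))
      (deriv (F · (v t)) (u t) * deriv u t + deriv (F (u t)) (v t) * deriv v t) t := by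
  rw [← fderiv_uncurry_apply hF]
  exact hF.hasFDerivAt.comp_hasDerivAt t (hu.hasDerivAt.prodMk hv.hasDerivAt)

end ChainRule

section Hamiltonian

/-- The canonical Poisson bracket `{F, G} = F_q G_p - F_p G_q` of two functions of `(q, p)`, which
governs the evolution of observables along a Hamiltonian flow. -/
noncomputable def poissonBracket (F G : ℂ → ℂ → ℂ) (q p : ℂ) : ℂ :=
  deriv (F · p) q * deriv (G q) p - deriv (F q) p * deriv (G · p) q

/-- Hamilton's equations `δ q = ∂H/∂p`, `δ p = -∂H/∂q` at the time `t`, for the operator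
`δ = t (t - 1) d/dt`. The Hamiltonian `H` is a function of `(q, p)` only: it is the value at the
time `t` of a possibly time-dependent Hamiltonian. -/
structure HamiltonEquationsAt (H : ℂ → ℂ → ℂ) (q p : ℂ → ℂ) (t : ℂ) : Prop where
  differentiableAt_q : DifferentiableAt ℂ q t
  differentiableAt_p : DifferentiableAt ℂ p t
  delOp_q : delOp q t = deriv (H (q t)) (p t)
  delOp_p : delOp p t = -deriv (H · (p t)) (q t)

variable {E F H K : ℂ → ℂ → ℂ} {q p : ℂ → ℂ} {t : ℂ}

theorem poissonBracket_self (F : ℂ → ℂ → ℂ) (x y : ℂ) : poissonBracket F F x y = 0 := by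
  simp only [poissonBracket]
  ring

theorem poissonBracket_swap (F G : ℂ → ℂ → ℂ) (x y : ℂ) :
    poissonBracket F G x y = -poissonBracket G F x y := by
  simp only [poissonBracket]
  ring

theorem poissonBracket_add_const_mul_right (hE : Differentiable ℂ (uncurry E))
    (hK : Differentiable ℂ (uncurry K)) (F : ℂ → ℂ → ℂ) (c x y : ℂ) :
    poissonBracket F (fun x y => E x y + c * K x y) x y
      = poissonBracket F E x y + c * poissonBracket F K x y := by
  have hE_left : DifferentiableAt ℂ (E · y) x := by fun_prop
  have hK_left : DifferentiableAt ℂ (K · y) x := by fun_prop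
  have hE_right : DifferentiableAt ℂ (E x) y := by fun_prop
  have hK_right : DifferentiableAt ℂ (K x) y := by fun_prop
  simp only [poissonBracket, deriv_fun_add hE_left (hK_left.const_mul c),
    deriv_fun_add hE_right (hK_right.const_mul c), deriv_const_mul_field]
  ring

namespace HamiltonEquationsAt

theorem differentiableAt_comp (hflow : HamiltonEquationsAt H q p t)
    (hF : Differentiable ℂ (uncurry F)) : DifferentiableAt ℂ (fun s => F (q s) (p s)) t :=
  (hasDerivAt_comp₂ hF.differentiableAt hflow.differentiableAt_q
    hflow.differentiableAt_p).differentiableAt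

theorem delOp_comp (hflow : HamiltonEquationsAt H q p t) (hF : Differentiable ℂ (uncurry F)) :
    delOp (fun s => F (q s) (p s)) t = poissonBracket F H (q t) (p t) := by
  have hderiv := (hasDerivAt_comp₂ hF.differentiableAt hflow.differentiableAt_q
    hflow.differentiableAt_p).deriv
  have hq := hflow.delOp_q
  have hp := hflow.delOp_p
  simp only [delOp] at hq hp
  simp only [delOp, poissonBracket, hderiv]
  linear_combination deriv (F · (p t)) (q t) * hq + deriv (F (q t)) (p t) * hp

theorem delOp_comp_of_affine (hE : Differentiable ℂ (uncurry E))
    (hK : Differentiable ℂ (uncurry K))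
    (hflow : HamiltonEquationsAt (fun x y => E x y + t * K x y) q p t)
    (hF : Differentiable ℂ (uncurry F)) :
    delOp (fun s => F (q s) (p s)) t
      = poissonBracket F E (q t) (p t) + t * poissonBracket F K (q t) (p t) := by
  rw [hflow.delOp_comp hF, poissonBracket_add_const_mul_right hE hK]

theorem delOp_slope_of_affine (hE : Differentiable ℂ (uncurry E))
    (hK : Differentiable ℂ (uncurry K))
    (hflow : HamiltonEquationsAt (fun x y => E x y + t * K x y) q p t) :
    delOp (fun s => K (q s) (p s)) t = poissonBracket K E (q t) (p t) := by
  rw [hflow.delOp_comp_of_affine hE hK hK, poissonBracket_self, mul_zero, add_zero]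

theorem delOp_hamiltonian_of_affine (hE : Differentiable ℂ (uncurry E))
    (hK : Differentiable ℂ (uncurry K))
    (hflow : HamiltonEquationsAt (fun x y => E x y + t * K x y) q p t) :
    delOp (fun s => E (q s) (p s) + s * K (q s) (p s)) t
      = t * (t - 1) * K (q t) (p t) := by
  have hEt := hflow.differentiableAt_comp hE
  have hKt := hflow.differentiableAt_comp hK
  rw [delOp_add hEt (differentiableAt_fun_id.fun_mul hKt), delOp_mul differentiableAt_fun_id hKt,
    delOp_id, hflow.delOp_comp_of_affine hE hK hE, hflow.delOp_slope_of_affine hE hK,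
    poissonBracket_self, poissonBracket_swap E K]
  ring

theorem delOp_delOp_delOp_hamiltonian_of_affine (hE : Differentiable ℂ (uncurry E))
    (hK : Differentiable ℂ (uncurry K)) (hL : Differentiable ℂ (uncurry (poissonBracket K E)))
    {U : Set ℂ} (hU : IsOpen U)
    (hflow : ∀ s ∈ U, HamiltonEquationsAt (fun x y => E x y + s * K x y) q p s) (ht : t ∈ U)
    {h : ℂ → ℂ} (hh : h = fun s => E (q s) (p s) + s * K (q s) (p s)) :
    delOp (delOp (delOp h)) t + 2 * (1 - 2 * t) * delOp (delOp h) t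
      = t * (t - 1) * (poissonBracket (poissonBracket K E) E (q t) (p t)
          + t * poissonBracket (poissonBracket K E) K (q t) (p t)
          - (2 * t * (t - 1) + 1) * K (q t) (p t)) := by
  subst hh
  rw [delOp_delOp_delOp_add_of_delOp_eq hU
    (fun s hs => (hflow s hs).differentiableAt_comp hK)
    ((hflow t ht).differentiableAt_comp hL)
    (fun s hs => (hflow s hs).delOp_hamiltonian_of_affine hE hK)
    (fun s hs => (hflow s hs).delOp_slope_of_affine hE hK) ht,
    (hflow t ht).delOp_comp_of_affine hE hK hL]

end HamiltonEquationsAt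

end Hamiltonian

section PainleveSix

/-- The coefficient `E` in the decomposition `h₀ = E + t K` of the modified Hamiltonian. -/
noncomputable def pviIntercept (α0 α1 α2 α3 α4 q p : ℂ) : ℂ :=
  PVIModifiedHamiltonian α0 α1 α2 α3 α4 q p 0

/-- The coefficient `K = ∂h₀/∂t` in the decomposition `h₀ = E + t K` of the modified
Hamiltonian. -/
noncomputable def pviSlope (α0 α1 α2 α3 α4 q p : ℂ) : ℂ :=
  PVIModifiedHamiltonian α0 α1 α2 α3 α4 q p 1 - PVIModifiedHamiltonian α0 α1 α2 α3 α4 q p 0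

/-- The third generator `L = {K, E}` of the Poisson algebra of the decomposition `h₀ = E + t K`,
as an explicit polynomial. -/
noncomputable def pviBracket (α0 α1 α2 α3 α4 q p : ℂ) : ℂ :=
  (q * (q - 1) * p ^ 2 - (α3 * q + α4 * (q - 1)) * p + α2 * (α1 + α2))
      * (2 * q * (q - 1) * p - (α3 * q + α4 * (q - 1)))
    - (α0 - 1) * ((2 * q - 1) * q * (q - 1) * p ^ 2 - (α3 * q ^ 2 + α4 * (q - 1) ^ 2) * p)

variable (α0 α1 α2 α3 α4 : ℂ)

local notation "𝓔" => pviIntercept α0 α1 α2 α3 α4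
local notation "𝓚" => pviSlope α0 α1 α2 α3 α4
local notation "𝓛" => pviBracket α0 α1 α2 α3 α4

theorem PVIModifiedHamiltonian_eq_affine (q p t : ℂ) :
    PVIModifiedHamiltonian α0 α1 α2 α3 α4 q p t = 𝓔 q p + t * 𝓚 q p := by
  simp only [pviIntercept, pviSlope, PVIModifiedHamiltonian, PVIHamiltonian]
  ring

theorem differentiable_pviIntercept : Differentiable ℂ (uncurry 𝓔) := by
  unfold pviIntercept PVIModifiedHamiltonian PVIHamiltonian uncurry
  fun_prop

theorem differentiable_pviSlope : Differentiable ℂ (uncurry 𝓚) := by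
  unfold pviSlope PVIModifiedHamiltonian PVIHamiltonian uncurry
  fun_prop

theorem differentiable_pviBracket : Differentiable ℂ (uncurry 𝓛) := by
  unfold pviBracket uncurry
  fun_prop

theorem deriv_pviIntercept_left (q p : ℂ) :
    deriv (𝓔 · p) q = (3 * q - 2) * q * p ^ 2
      - ((α0 - 1) * (2 * q - 1) + 2 * α3 * q + α4 * (2 * q - 1)) * p + α2 * (α1 + α2) := by
  unfold pviIntercept PVIModifiedHamiltonian PVIHamiltonian
  simp (disch := fun_prop) only [deriv_fun_add, deriv_fun_sub, deriv_fun_mul, deriv_fun_pow,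
    deriv_const', deriv_id'', deriv_const_mul_id']
  ring

theorem deriv_pviIntercept_right (q p : ℂ) :
    deriv (𝓔 q) p = 2 * q ^ 2 * (q - 1) * p
      - ((α0 - 1) * q * (q - 1) + α3 * q ^ 2 + α4 * q * (q - 1)) := by
  unfold pviIntercept PVIModifiedHamiltonian PVIHamiltonian
  simp (disch := fun_prop) only [deriv_fun_add, deriv_fun_sub, deriv_fun_mul, deriv_fun_pow,
    deriv_const', deriv_id'', deriv_const_mul_id']
  ring

theorem deriv_pviSlope_left (q p : ℂ) :
    deriv (𝓚 · p) q = -(2 * q - 1) * p ^ 2 + (α3 + α4) * p := by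
  unfold pviSlope PVIModifiedHamiltonian PVIHamiltonian
  simp (disch := fun_prop) only [deriv_fun_add, deriv_fun_sub, deriv_fun_mul, deriv_fun_pow,
    deriv_const', deriv_id'', deriv_const_mul_id']
  ring

theorem deriv_pviSlope_right (q p : ℂ) :
    deriv (𝓚 q) p = -2 * q * (q - 1) * p + (α3 * q + α4 * (q - 1)) := by
  unfold pviSlope PVIModifiedHamiltonian PVIHamiltonian
  simp (disch := fun_prop) only [deriv_fun_add, deriv_fun_sub, deriv_fun_mul, deriv_fun_pow,
    deriv_const', deriv_id'', deriv_const_mul_id']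
  ring

theorem deriv_pviBracket_left (q p : ℂ) :
    deriv (𝓛 · p) q
      = ((2 * q - 1) * p ^ 2 - (α3 + α4) * p) * (2 * q * (q - 1) * p - (α3 * q + α4 * (q - 1)))
        + (q * (q - 1) * p ^ 2 - (α3 * q + α4 * (q - 1)) * p + α2 * (α1 + α2))
          * (2 * (2 * q - 1) * p - (α3 + α4))
        - (α0 - 1) * ((6 * q * (q - 1) + 1) * p ^ 2 - 2 * (α3 * q + α4 * (q - 1)) * p) := by
  unfold pviBracket
  simp (disch := fun_prop) only [deriv_fun_add, deriv_fun_sub, deriv_fun_mul, deriv_fun_pow,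
    deriv_const', deriv_id'', deriv_const_mul_id']
  ring

theorem deriv_pviBracket_right (q p : ℂ) :
    deriv (𝓛 q) p
      = (2 * q * (q - 1) * p - (α3 * q + α4 * (q - 1))) ^ 2
        + 2 * q * (q - 1)
          * (q * (q - 1) * p ^ 2 - (α3 * q + α4 * (q - 1)) * p + α2 * (α1 + α2))
        - (α0 - 1) * (2 * (2 * q - 1) * q * (q - 1) * p - (α3 * q ^ 2 + α4 * (q - 1) ^ 2)) := by
  unfold pviBracket
  simp (disch := fun_prop) only [deriv_fun_add, deriv_fun_sub, deriv_fun_mul, deriv_fun_pow,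
    deriv_const', deriv_id'', deriv_const_mul_id']
  ring

theorem poissonBracket_pviSlope_pviIntercept : poissonBracket 𝓚 𝓔 = 𝓛 := by
  ext q p
  simp only [poissonBracket, deriv_pviSlope_left, deriv_pviSlope_right, deriv_pviIntercept_left,
    deriv_pviIntercept_right, pviBracket]
  ring

variable {α0 α1 α2 α3 α4}

theorem poissonBracket_pviBracket_pviIntercept (hα : α0 + α1 + 2 * α2 + α3 + α4 = 1) (q p : ℂ) :
    poissonBracket 𝓛 𝓔 q p
      = -4 * 𝓔 q p * 𝓚 q p - 2 * 𝓔 q p ^ 2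
        + ((α0 - 1) ^ 2 + α1 ^ 2 + α3 ^ 2 + α4 ^ 2) / 6 * (𝓔 q p + 2 * 𝓚 q p)
        + (α3 - α1) * (α3 + α1) * (α0 + α4 - 1) * (α0 - α4 - 1) / 8 := by
  obtain rfl : α0 = 1 - α1 - 2 * α2 - α3 - α4 := by linear_combination hα
  rw [poissonBracket, deriv_pviBracket_left, deriv_pviBracket_right, deriv_pviIntercept_left,
    deriv_pviIntercept_right]
  simp only [pviIntercept, pviSlope, PVIModifiedHamiltonian, PVIHamiltonian]
  ring

theorem poissonBracket_pviBracket_pviSlope (hα : α0 + α1 + 2 * α2 + α3 + α4 = 1) (q p : ℂ) :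
    poissonBracket 𝓛 𝓚 q p
      = 4 * 𝓔 q p * 𝓚 q p + 2 * 𝓚 q p ^ 2
        - ((α0 - 1) ^ 2 + α1 ^ 2 + α3 ^ 2 + α4 ^ 2) / 6 * (2 * 𝓔 q p + 𝓚 q p)
        + (α4 - α3) * (α3 + α4) * (α0 + α1 - 1) * (α0 - α1 - 1) / 8 := by
  obtain rfl : α0 = 1 - α1 - 2 * α2 - α3 - α4 := by linear_combination hα
  rw [poissonBracket, deriv_pviBracket_left, deriv_pviBracket_right, deriv_pviSlope_left,
    deriv_pviSlope_right]
  simp only [pviIntercept, pviSlope, PVIModifiedHamiltonian, PVIHamiltonian]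
  ring

theorem SolvesHamSystem.hamiltonEquationsAt {U : Set ℂ} {q p : ℂ → ℂ}
    (hsys : SolvesHamSystem α0 α1 α2 α3 α4 U q p) {t : ℂ} (ht : t ∈ U)
    (hq : DifferentiableAt ℂ q t) (hp : DifferentiableAt ℂ p t) :
    HamiltonEquationsAt (fun x y => 𝓔 x y + t * 𝓚 x y) q p t := by
  obtain ⟨hδq, hδp⟩ := hsys t ht
  refine ⟨hq, hp, ?_, ?_⟩
  · simpa only [delOp, ← PVIModifiedHamiltonian_eq_affine, PVIModifiedHamiltonian,
      deriv_add_const] using hδq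
  · simpa only [delOp, ← PVIModifiedHamiltonian_eq_affine, PVIModifiedHamiltonian,
      deriv_add_const] using hδp

end PainleveSix

/-- third-order equation for the modified Hamiltonian along a solution. -/
theorem third_order_equation_for_modified_hamiltonian
    (α0 α1 α2 α3 α4 : ℂ) (hα : α0 + α1 + 2 * α2 + α3 + α4 = 1)
    (U : Set ℂ) (hUopen : IsOpen U) (hU01 : U ⊆ ({0, 1} : Set ℂ)ᶜ)
    (q p : ℂ → ℂ)
    (hq : DifferentiableOn ℂ q U) (hp : DifferentiableOn ℂ p U)
    (hsys : SolvesHamSystem α0 α1 α2 α3 α4 U q p)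
    (C : ℂ) (hC : C = (α0 - 1) ^ 2 + α1 ^ 2 + α3 ^ 2 + α4 ^ 2)
    (G : ℂ → ℂ)
    (hG : G = fun t => (α4 - α3) * (α3 + α4) * (α0 + α1 - 1) * (α0 - α1 - 1) * t
        + (α3 - α1) * (α3 + α1) * (α0 + α4 - 1) * (α0 - α4 - 1))
    (h : ℂ → ℂ)
    (hh : h = fun t => PVIModifiedHamiltonian α0 α1 α2 α3 α4 (q t) (p t) t) :
    ∀ t ∈ U,
      delOp (delOp (delOp h)) t + 2 * (1 - 2 * t) * delOp (delOp h) t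
        + 6 * (delOp h t) ^ 2 + 4 * (1 - 2 * t) * h t * delOp h t
        - ((C - 6) * t * (t - 1) + C - 3) / 3 * delOp h t
        + 2 * t * (t - 1) * (h t) ^ 2 + C * t * (t - 1) * (2 * t - 1) / 6 * h t
        - t * (t - 1) * G t / 8 = 0 := by
  intro t ht
  have hE := differentiable_pviIntercept α0 α1 α2 α3 α4
  have hK := differentiable_pviSlope α0 α1 α2 α3 α4
  have hKE := poissonBracket_pviSlope_pviIntercept α0 α1 α2 α3 α4
  have hflow := fun s (hs : s ∈ U) => hsys.hamiltonEquationsAt hs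
    (hq.differentiableAt (hUopen.mem_nhds hs)) (hp.differentiableAt (hUopen.mem_nhds hs))
  have hh_affine : h = fun s => pviIntercept α0 α1 α2 α3 α4 (q s) (p s)
      + s * pviSlope α0 α1 α2 α3 α4 (q s) (p s) := by
    simpa only [PVIModifiedHamiltonian_eq_affine] using hh
  have hδh : delOp h t = t * (t - 1) * pviSlope α0 α1 α2 α3 α4 (q t) (p t) :=
    hh_affine ▸ (hflow t ht).delOp_hamiltonian_of_affine hE hK
  rw [HamiltonEquationsAt.delOp_delOp_delOp_hamiltonian_of_affine hE hK
      (hKE ▸ differentiable_pviBracket α0 α1 α2 α3 α4) hUopen hflow ht hh_affine, hKE,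
    poissonBracket_pviBracket_pviIntercept hα, poissonBracket_pviBracket_pviSlope hα, hδh,
    congrFun hh_affine t, hC, hG]
  ring
end

section
/- Let U(τ) = (τ−1)/(3τ−2) and X = √(−i(3τ−2)) (principal branch). Then for all τ in the complex upper half-plane: η(U(τ)/2) = e^{−7πi/24}·X·η(τ)³/(η(τ/2)η(2τ)), η(U(τ)) = e^{−πi/12}·X·η(τ), η(3U(τ)/2) = e^{−πi/24}·X·η(3τ)³/(η(3τ/2)η(6τ)), η(2U(τ)) = e^{πi/12}·(X/√2)·η(τ/2), η(3U(τ)) = e^{−πi/12}·X·η(3τ), and η(6U(τ)) = e^{πi/12}·(X/√2)·η(3τ/2). -/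
open Complex

/-- The theta product θ(x;p) = ∏_{j≥0} (1 - pʲx)(1 - pʲ⁺¹x⁻¹). -/
noncomputable def jtheta (x p : ℂ) : ℂ :=
  ∏' j : ℕ, ((1 - p ^ j * x) * (1 - p ^ (j + 1) * x⁻¹))

/-- Dedekind's eta function η(τ) = e^{πiτ/12} ∏_{j≥1} (1 - e^{2πijτ}). -/
noncomputable def dedekindEta (τ : ℂ) : ℂ :=
  Complex.exp ((Real.pi : ℂ) * Complex.I * τ / 12) *
    ∏' j : ℕ, (1 - Complex.exp (2 * (Real.pi : ℂ) * Complex.I * (j + 1) * τ))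

/-- The eta quotient φ₁ = η(τ/2)²/η(τ)². -/
noncomputable def phi1 (τ : ℂ) : ℂ := dedekindEta (τ / 2) ^ 2 / dedekindEta τ ^ 2

/-- The eta quotient φ₂ = η(2τ)²/η(τ)². -/
noncomputable def phi2 (τ : ℂ) : ℂ := dedekindEta (2 * τ) ^ 2 / dedekindEta τ ^ 2

/-- The eta quotient φ₃ = η(3τ/2)/η(τ/2). -/
noncomputable def phi3 (τ : ℂ) : ℂ := dedekindEta (3 * τ / 2) / dedekindEta (τ / 2)

/-- The eta quotient φ₄ = η(6τ)/η(2τ). -/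
noncomputable def phi4 (τ : ℂ) : ℂ := dedekindEta (6 * τ) / dedekindEta (2 * τ)

/-- The eta quotient φ₅ = η(3τ)/η(τ). -/
noncomputable def phi5 (τ : ℂ) : ℂ := dedekindEta (3 * τ) / dedekindEta τ

/-!
Write `V_n z = z / (n z + 1)`. Conjugating the translation by `-n` with `z ↦ -1 / z` gives
`η (V_n z) = e^{-nπi/12} √(n z + 1) η z`, with no choice of branch: `n z + 1` is the product of the
two arguments of square roots that arise, `-i z` and `-i (-1 / z - n)`, and both lie in the right
half-plane. Each multiple of `U τ` in the theorem is a `V_n` up to translations: if `a m = 3`, then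
`a U τ = V_m (a (τ - 1))`, `a U τ / 2 = V_{2m} (a (τ - 1) / 2)` and
`2 a U τ = V_{-m} (a τ / 2) + a`; the pairs `(a, m) = (1, 3), (3, 1)` give the six formulas. In the
second case `a` is odd, so the argument is a half-integral translate of `a τ / 2`, to which the
formula for `η (z + 1/2)` applies.
-/

open scoped Real

section EulerFunction

variable {R : Type*} [NormedCommRing R]

/-- Euler's function `φ(q) = ∏_{j ≥ 1} (1 - q ^ j)`, the product part of `η`. -/
noncomputable def eulerFunction (q : R) : R := ∏' j : ℕ, (1 - q ^ (j + 1))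

variable [NormOneClass R] [CompleteSpace R] {q : R}

lemma multipliable_one_sub_pow_comp (hq : ‖q‖ < 1) {f : ℕ → ℕ} (hf : f.Injective) :
    Multipliable fun k ↦ 1 - q ^ f k := by
  have hsum : Summable fun k ↦ ‖-q ^ f k‖ := by
    simpa only [norm_neg, Function.comp_def] using
      (summable_norm_geometric_of_norm_lt_one hq).comp_injective hf
  simpa only [sub_eq_add_neg] using multipliable_one_add_of_summable hsum

lemma multipliable_one_sub_pow_odd (hq : ‖q‖ < 1) :
    Multipliable fun k : ℕ ↦ 1 - q ^ (2 * k + 1) :=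
  multipliable_one_sub_pow_comp hq fun a b h ↦ by lia

lemma eulerFunction_eq_tprod_odd_mul (hq : ‖q‖ < 1) :
    eulerFunction q = (∏' k : ℕ, (1 - q ^ (2 * k + 1))) * eulerFunction (q ^ 2) := by
  have heven : Multipliable fun k : ℕ ↦ 1 - q ^ (2 * k + 1 + 1) :=
    multipliable_one_sub_pow_comp hq fun a b h ↦ by lia
  simp only [eulerFunction, ← pow_mul, mul_add_one]
  exact (tprod_even_mul_odd (f := fun j ↦ 1 - q ^ (j + 1))
    (multipliable_one_sub_pow_odd hq) heven).symm

lemma tprod_one_sub_pow_odd_mul_neg (hq : ‖q‖ < 1) :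
    (∏' k : ℕ, (1 - q ^ (2 * k + 1))) * ∏' k : ℕ, (1 - (-q) ^ (2 * k + 1)) =
      ∏' k : ℕ, (1 - (q ^ 2) ^ (2 * k + 1)) := by
  rw [← (multipliable_one_sub_pow_odd hq).tprod_mul
    (multipliable_one_sub_pow_odd (by rwa [norm_neg]))]
  refine tprod_congr fun k ↦ ?_
  rw [Odd.neg_pow ⟨k, rfl⟩]
  ring

lemma eulerFunction_neg_mul (hq : ‖q‖ < 1) :
    eulerFunction (-q) * (eulerFunction q * eulerFunction (q ^ 4)) = eulerFunction (q ^ 2) ^ 3 := by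
  have hq_sq : ‖q ^ 2‖ < 1 :=
    (norm_pow_le q 2).trans_lt (pow_lt_one₀ (norm_nonneg q) hq two_ne_zero)
  have split_q := eulerFunction_eq_tprod_odd_mul hq
  have split_neg := eulerFunction_eq_tprod_odd_mul (q := -q) (by rwa [norm_neg])
  have split_sq := eulerFunction_eq_tprod_odd_mul hq_sq
  rw [neg_sq] at split_neg
  rw [← tprod_one_sub_pow_odd_mul_neg hq, ← pow_mul] at split_sq
  rw [split_q, split_neg]
  linear_combination -eulerFunction (q ^ 2) ^ 2 * split_sq

end EulerFunction

section PrincipalPowers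

lemma mul_cpow_of_arg_add_mem {x y : ℂ} (hx : x ≠ 0) (hy : y ≠ 0)
    (h : arg x + arg y ∈ Set.Ioc (-π) π) (s : ℂ) : (x * y) ^ s = x ^ s * y ^ s := by
  rw [cpow_def_of_ne_zero (mul_ne_zero hx hy), cpow_def_of_ne_zero hx, cpow_def_of_ne_zero hy,
    log_mul hx hy h, add_mul, exp_add]

lemma mul_cpow_of_re_nonneg_of_re_pos {x y : ℂ} (hx₀ : x ≠ 0) (hx : 0 ≤ x.re) (hy : 0 < y.re)
    (s : ℂ) : (x * y) ^ s = x ^ s * y ^ s := by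
  have hy₀ : y ≠ 0 := by
    rintro rfl
    simp at hy
  have hargx := abs_le.1 (abs_arg_le_pi_div_two_iff.2 hx)
  have hargy := abs_lt.1 (abs_arg_lt_pi_div_two_iff.2 (.inl hy))
  exact mul_cpow_of_arg_add_mem hx₀ hy₀ ⟨by linarith, by linarith⟩ s

lemma ofReal_mul_cpow_one_half {r : ℝ} (hr : 0 < r) {z : ℂ} (hz : z ≠ 0) :
    ((r : ℂ) * z) ^ (1 / 2 : ℂ) = (√r : ℂ) * z ^ (1 / 2 : ℂ) := by
  rw [mul_cpow_of_arg_add_mem (ofReal_ne_zero.2 hr.ne') hz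
    (by rw [arg_ofReal_of_nonneg hr.le, zero_add]; exact arg_mem_Ioc z), Real.sqrt_eq_rpow,
    ofReal_cpow hr.le]
  norm_num

lemma I_cpow_one_half : I ^ (1 / 2 : ℂ) = exp (π * I / 4) := by
  rw [cpow_def_of_ne_zero I_ne_zero, log_I]
  ring_nf

lemma neg_I_cpow_one_half : (-I) ^ (1 / 2 : ℂ) = exp (-(π * I / 4)) := by
  rw [cpow_def_of_ne_zero (neg_ne_zero.2 I_ne_zero), log_neg_I]
  ring_nf

lemma cpow_one_half_of_im_pos {w : ℂ} (hw : 0 < w.im) :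
    w ^ (1 / 2 : ℂ) = exp (π * I / 4) * (-I * w) ^ (1 / 2 : ℂ) := by
  rw [← I_cpow_one_half, ← mul_cpow_of_re_nonneg_of_re_pos I_ne_zero (by simp) (by simpa using hw)]
  simp [← mul_assoc]

lemma cpow_one_half_of_im_neg {w : ℂ} (hw : w.im < 0) :
    w ^ (1 / 2 : ℂ) = exp (-(π * I / 4)) * (I * w) ^ (1 / 2 : ℂ) := by
  rw [← neg_I_cpow_one_half, ← mul_cpow_of_re_nonneg_of_re_pos (neg_ne_zero.2 I_ne_zero) (by simp)
    (by simpa using hw)]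
  simp [← mul_assoc]

end PrincipalPowers

lemma im_neg_one_div_pos {z : ℂ} (hz : 0 < z.im) : 0 < (-1 / z).im := by
  simpa [neg_div] using UpperHalfPlane.im_inv_neg_coe_pos ⟨z, hz⟩

lemma ne_zero_of_im_pos {z : ℂ} (hz : 0 < z.im) : z ≠ 0 :=
  UpperHalfPlane.ne_zero ⟨z, hz⟩

lemma dedekindEta_eq_exp_mul_eulerFunction (z : ℂ) :
    dedekindEta z = exp (π * I * z / 12) * eulerFunction (exp (2 * π * I * z)) := by
  simp only [dedekindEta, eulerFunction, ← exp_nat_mul]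
  push_cast
  congr! 5
  ring

lemma dedekindEta_eq_modularForm_eta (z : ℂ) : dedekindEta z = ModularForm.eta z := by
  simp only [dedekindEta, ModularForm.eta, ModularForm.eta_q_eq_cexp, Function.Periodic.qParam]
  congr 2
  push_cast
  ring

lemma dedekindEta_ne_zero {z : ℂ} (hz : 0 < z.im) : dedekindEta z ≠ 0 :=
  dedekindEta_eq_modularForm_eta z ▸ ModularForm.eta_ne_zero hz

lemma dedekindEta_add_intCast (z : ℂ) (n : ℤ) :
    dedekindEta (z + n) = exp (n * (π * I / 12)) * dedekindEta z := by
  have hq : exp (2 * π * I * (z + n)) = exp (2 * π * I * z) := by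
    rw [mul_add, mul_comm (2 * π * I) (n : ℂ), exp_add, exp_int_mul_two_pi_mul_I, mul_one]
  rw [dedekindEta_eq_exp_mul_eulerFunction, dedekindEta_eq_exp_mul_eulerFunction, hq, ← mul_assoc,
    ← exp_add]
  ring_nf

lemma dedekindEta_neg_one_div {z : ℂ} (hz : 0 < z.im) :
    dedekindEta (-1 / z) = (-I * z) ^ (1 / 2 : ℂ) * dedekindEta z := by
  have hS := ModularForm.eta_comp_eq_csqrt_I_inv hz
  simp only [Function.comp, Pi.smul_apply, Pi.mul_apply, smul_eq_mul, Complex.sqrt, ← one_div]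
    at hS
  rw [dedekindEta_eq_modularForm_eta, dedekindEta_eq_modularForm_eta, hS,
    cpow_one_half_of_im_pos hz, I_cpow_one_half]
  field_simp [exp_ne_zero]

lemma dedekindEta_add_one_half {z : ℂ} (hz : 0 < z.im) :
    dedekindEta (z + 1 / 2) = exp (π * I / 24) *
      (dedekindEta (2 * z) ^ 3 / (dedekindEta z * dedekindEta (4 * z))) := by
  rw [← mul_div_assoc,
    eq_div_iff (mul_ne_zero (dedekindEta_ne_zero hz) (dedekindEta_ne_zero (by simpa using hz)))]
  set q := exp (2 * π * I * z) with hq_def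
  have hq : ‖q‖ < 1 := UpperHalfPlane.norm_exp_two_pi_I_lt_one ⟨z, hz⟩
  have hq_half : exp (2 * π * I * (z + 1 / 2)) = -q := by
    rw [show 2 * π * I * (z + 1 / 2) = 2 * π * I * z + π * I by ring, exp_add, exp_pi_mul_I,
      mul_neg_one]
  have hq_two : exp (2 * π * I * (2 * z)) = q ^ 2 := by
    rw [hq_def, ← exp_nat_mul]
    ring_nf
  have hq_four : exp (2 * π * I * (4 * z)) = q ^ 4 := by
    rw [hq_def, ← exp_nat_mul]
    ring_nf
  have hprefactor : exp (π * I * (z + 1 / 2) / 12) *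
      (exp (π * I * z / 12) * exp (π * I * (4 * z) / 12)) =
        exp (π * I / 24) * exp (π * I * (2 * z) / 12) ^ 3 := by
    simp only [← exp_nat_mul, ← exp_add]
    ring_nf
  simp only [dedekindEta_eq_exp_mul_eulerFunction, hq_half, hq_two, hq_four, ← hq_def]
  linear_combination (eulerFunction (-q) * (eulerFunction q * eulerFunction (q ^ 4))) * hprefactor +
    exp (π * I / 24) * exp (π * I * (2 * z) / 12) ^ 3 * eulerFunction_neg_mul hq

lemma dedekindEta_add_intCast_div_two {z : ℂ} (hz : 0 < z.im) {k : ℤ} (hk : Odd k) :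
    dedekindEta (z + k / 2) = exp (k * (π * I / 24)) *
      (dedekindEta (2 * z) ^ 3 / (dedekindEta z * dedekindEta (4 * z))) := by
  obtain ⟨n, rfl⟩ := hk
  rw [show z + ((2 * n + 1 : ℤ) : ℂ) / 2 = z + 1 / 2 + n by push_cast; ring,
    dedekindEta_add_intCast, dedekindEta_add_one_half hz, ← mul_assoc, ← exp_add]
  push_cast
  ring_nf

lemma dedekindEta_div_intCast_mul_add_one {z : ℂ} (hz : 0 < z.im) (n : ℤ) :
    dedekindEta (z / (n * z + 1)) =
      exp (-n * (π * I / 12)) * (n * z + 1) ^ (1 / 2 : ℂ) * dedekindEta z := by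
  have hz₀ := ne_zero_of_im_pos hz
  have hv : 0 < (-1 / z + (-n : ℤ)).im := by simpa using im_neg_one_div_pos hz
  have hv_eq : -1 / z + (-n : ℤ) = -((n * z + 1) / z) := by
    push_cast
    field_simp
    ring
  have hSTS : z / (n * z + 1) = -1 / (-1 / z + (-n : ℤ)) := by
    rw [hv_eq, neg_div_neg_eq, one_div_div]
  have hfactor : n * z + 1 = -I * (-1 / z + (-n : ℤ)) * (-I * z) := by
    rw [hv_eq]
    field_simp
    simp
  have hsqrt : (n * z + 1) ^ (1 / 2 : ℂ) =
      (-I * (-1 / z + (-n : ℤ))) ^ (1 / 2 : ℂ) * (-I * z) ^ (1 / 2 : ℂ) := by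
    have hv_re : 0 < (-I * (-1 / z + (-n : ℤ))).re := by simpa using hv
    rw [hfactor, mul_cpow_of_re_nonneg_of_re_pos
      (mul_ne_zero (neg_ne_zero.2 I_ne_zero) (ne_zero_of_im_pos hv)) hv_re.le (by simpa using hz)]
  rw [hSTS, dedekindEta_neg_one_div hv, dedekindEta_add_intCast, dedekindEta_neg_one_div hz, hsqrt]
  push_cast
  ring

lemma dedekindEta_div_intCast_mul_add_one_of_pos {z : ℂ} (hz : 0 < z.im) {n : ℤ} (hn : 0 < n) :
    dedekindEta (z / (n * z + 1)) =
      exp ((3 - n) * (π * I / 12)) * (-I * (n * z + 1)) ^ (1 / 2 : ℂ) * dedekindEta z := by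
  have him : 0 < (n * z + 1).im := by simpa using mul_pos (Int.cast_pos.2 hn) hz
  rw [dedekindEta_div_intCast_mul_add_one hz, cpow_one_half_of_im_pos him, ← mul_assoc, ← exp_add]
  ring_nf

lemma dedekindEta_div_intCast_mul_add_one_of_neg {z : ℂ} (hz : 0 < z.im) {n : ℤ} (hn : n < 0) :
    dedekindEta (z / (n * z + 1)) =
      exp (-(3 + n) * (π * I / 12)) * (I * (n * z + 1)) ^ (1 / 2 : ℂ) * dedekindEta z := by
  have him : (n * z + 1).im < 0 := by simpa using mul_neg_of_neg_of_pos (Int.cast_lt_zero.2 hn) hz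
  rw [dedekindEta_div_intCast_mul_add_one hz, cpow_one_half_of_im_neg him, ← mul_assoc, ← exp_add]
  ring_nf

section MultiplesOfU

variable {τ : ℂ} {a m : ℤ}

lemma dedekindEta_mul_U (hτ : 0 < τ.im) (hm : 0 < m) (ham : a * m = 3) :
    dedekindEta (a * ((τ - 1) / (3 * τ - 2))) =
      exp ((3 - m - a) * (π * I / 12)) * (-I * (3 * τ - 2)) ^ (1 / 2 : ℂ) *
        dedekindEta (a * τ) := by
  have ha : 0 < a := pos_of_mul_pos_left (ham ▸ three_pos) hm.le
  have ham' : (a * m : ℂ) = 3 := mod_cast ham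
  have him : 0 < (a * (τ - 1)).im := by simpa using mul_pos (Int.cast_pos.2 ha) hτ
  have hdenom : m * (a * (τ - 1)) + 1 = 3 * τ - 2 := by linear_combination (τ - 1) * ham'
  have hV := dedekindEta_div_intCast_mul_add_one_of_pos him hm
  rw [hdenom] at hV
  rw [← mul_div_assoc, hV, show a * (τ - 1) = a * τ + (-a : ℤ) by push_cast; ring,
    dedekindEta_add_intCast, show (3 - m - a) * (π * I / 12) =
      (3 - m) * (π * I / 12) + (-a : ℤ) * (π * I / 12) by push_cast; ring, exp_add]
  ring

lemma dedekindEta_mul_U_div_two (hτ : 0 < τ.im) (hm : 0 < m) (ham : a * m = 3) :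
    dedekindEta (a * ((τ - 1) / (3 * τ - 2)) / 2) =
      exp ((6 - 4 * m - a) * (π * I / 24)) * (-I * (3 * τ - 2)) ^ (1 / 2 : ℂ) *
        (dedekindEta (a * τ) ^ 3 / (dedekindEta (a * τ / 2) * dedekindEta (2 * (a * τ)))) := by
  have ha : 0 < a := pos_of_mul_pos_left (ham ▸ three_pos) hm.le
  have ha_odd : Odd a := (Int.odd_mul.1 (ham.symm ▸ (by decide : Odd (3 : ℤ)))).1
  have ham' : (a * m : ℂ) = 3 := mod_cast ham
  have him : 0 < (a * τ / 2).im := by simpa using mul_pos (Int.cast_pos.2 ha) hτ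
  have him' : 0 < (a * (τ - 1) / 2).im := by simpa using mul_pos (Int.cast_pos.2 ha) hτ
  have hdenom : (2 * m : ℤ) * (a * (τ - 1) / 2) + 1 = 3 * τ - 2 := by
    push_cast
    linear_combination (τ - 1) * ham'
  have hV := dedekindEta_div_intCast_mul_add_one_of_pos him' (mul_pos two_pos hm)
  rw [hdenom, show a * (τ - 1) / 2 = a * τ / 2 + (-a : ℤ) / 2 by push_cast; ring,
    dedekindEta_add_intCast_div_two him ha_odd.neg] at hV
  rw [show a * ((τ - 1) / (3 * τ - 2)) / 2 = (a * τ / 2 + (-a : ℤ) / 2) / (3 * τ - 2) by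
      push_cast; ring, hV, show (6 - 4 * m - a) * (π * I / 24) =
      (3 - (2 * m : ℤ)) * (π * I / 12) + (-a : ℤ) * (π * I / 24) by push_cast; ring, exp_add]
  ring_nf

lemma dedekindEta_two_mul_mul_U (hτ : 0 < τ.im) (hm : 0 < m) (ham : a * m = 3) :
    dedekindEta (2 * a * ((τ - 1) / (3 * τ - 2))) =
      exp ((a + m - 3) * (π * I / 12)) * ((-I * (3 * τ - 2)) ^ (1 / 2 : ℂ) / (√2 : ℂ)) *
        dedekindEta (a * τ / 2) := by
  have ha : 0 < a := pos_of_mul_pos_left (ham ▸ three_pos) hm.le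
  have him : 0 < (a * τ / 2).im := by simpa using mul_pos (Int.cast_pos.2 ha) hτ
  have hw₀ : 3 * τ - 2 ≠ 0 := ne_zero_of_im_pos (by simpa using hτ)
  have hdenom : ((-m : ℤ) : ℂ) * (a * τ / 2) + 1 = -(3 * τ - 2) / 2 := by
    have ham' : (a * m : ℂ) = 3 := mod_cast ham
    push_cast
    linear_combination (-τ / 2) * ham'
  have hdenom₀ : -(3 * τ - 2) / 2 ≠ 0 := div_ne_zero (neg_ne_zero.2 hw₀) two_ne_zero
  have hTV : 2 * a * ((τ - 1) / (3 * τ - 2)) = a * τ / 2 / (-(3 * τ - 2) / 2) + a := by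
    rw [← mul_div_assoc, div_add' _ _ _ hdenom₀, div_eq_div_iff hw₀ hdenom₀]
    ring
  have hsqrt : (I * (-(3 * τ - 2) / 2)) ^ (1 / 2 : ℂ) =
      (-I * (3 * τ - 2)) ^ (1 / 2 : ℂ) / (√2 : ℂ) := by
    have hscale := ofReal_mul_cpow_one_half two_pos (mul_ne_zero I_ne_zero hdenom₀)
    rw [eq_div_iff (by simp), mul_comm, ← hscale]
    push_cast
    ring_nf
  have hV := dedekindEta_div_intCast_mul_add_one_of_neg him (neg_neg_of_pos hm)
  rw [hdenom, hsqrt] at hV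
  rw [hTV, dedekindEta_add_intCast, hV, ← mul_assoc, ← mul_assoc, ← exp_add]
  push_cast
  ring_nf

end MultiplesOfU

/-- transformation of eta under U(τ) = (τ-1)/(3τ-2),
with X = √(-i(3τ-2)) the principal branch. -/
theorem eta_transformation_under_U (τ : ℂ) (hτ : 0 < τ.im)
    (X : ℂ) (hX : X = (-Complex.I * (3 * τ - 2)) ^ ((1 : ℂ) / 2)) :
    dedekindEta ((τ - 1) / (3 * τ - 2) / 2)
      = Complex.exp (-7 * (Real.pi : ℂ) * Complex.I / 24) * X * dedekindEta τ ^ 3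
          / (dedekindEta (τ / 2) * dedekindEta (2 * τ)) ∧
    dedekindEta ((τ - 1) / (3 * τ - 2))
      = Complex.exp (-(Real.pi : ℂ) * Complex.I / 12) * X * dedekindEta τ ∧
    dedekindEta (3 * ((τ - 1) / (3 * τ - 2)) / 2)
      = Complex.exp (-(Real.pi : ℂ) * Complex.I / 24) * X * dedekindEta (3 * τ) ^ 3
          / (dedekindEta (3 * τ / 2) * dedekindEta (6 * τ)) ∧
    dedekindEta (2 * ((τ - 1) / (3 * τ - 2)))
      = Complex.exp ((Real.pi : ℂ) * Complex.I / 12) * (X / (Real.sqrt 2 : ℂ))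
          * dedekindEta (τ / 2) ∧
    dedekindEta (3 * ((τ - 1) / (3 * τ - 2)))
      = Complex.exp (-(Real.pi : ℂ) * Complex.I / 12) * X * dedekindEta (3 * τ) ∧
    dedekindEta (6 * ((τ - 1) / (3 * τ - 2)))
      = Complex.exp ((Real.pi : ℂ) * Complex.I / 12) * (X / (Real.sqrt 2 : ℂ))
          * dedekindEta (3 * τ / 2) := by
  subst hX
  have h13 : (1 : ℤ) * 3 = 3 := one_mul 3
  have h31 : (3 : ℤ) * 1 = 3 := mul_one 3
  refine ⟨?_, ?_, ?_, ?_, ?_, ?_⟩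
  · convert dedekindEta_mul_U_div_two hτ three_pos h13 using 2 <;> push_cast <;> ring_nf
  · convert dedekindEta_mul_U hτ three_pos h13 using 3 <;> push_cast <;> ring_nf
  · convert dedekindEta_mul_U_div_two hτ one_pos h31 using 2 <;> push_cast <;> ring_nf
  · convert dedekindEta_two_mul_mul_U hτ three_pos h13 using 3 <;> push_cast <;> ring_nf
  · convert dedekindEta_mul_U hτ one_pos h31 using 3 <;> push_cast <;> ring_nf
  · convert dedekindEta_two_mul_mul_U hτ one_pos h31 using 3 <;> push_cast <;> ring_nf
end

section
/- For all τ in the complex upper half-plane: φ1(τ+1) = e^{−πi/12}/(φ1(τ)φ2(τ)), φ2(τ+1) = e^{πi/6}·φ2(τ), φ3(τ+1) = e^{πi/12}·φ5(τ)³/(φ3(τ)φ4(τ)), φ4(τ+1) = e^{πi/3}·φ4(τ), and φ5(τ+1) = e^{πi/6}·φ5(τ). -/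
open Complex

/-!
Replacing `τ` by `τ + 1` multiplies `η (n * τ)` by a root of unity, which settles `φ₂`, `φ₄` and
`φ₅`. The half-integral arguments in `φ₁` and `φ₃` turn the nome `q = exp (π * I * τ)` into `-q`.
Splitting products by the parity of the exponent and using `(q; q²) (-q; q²) = (q²; q⁴)` gives
`(-q; -q) (q; q) (q⁴; q⁴) = (q²; q²)³`, that is,
`η ((τ + 1) / 2) * η (τ / 2) * η (2 * τ) = exp (π * I / 24) * η τ ^ 3`.
-/

open scoped Real

section QPochhammer

/-- The infinite `q`-Pochhammer symbol `(a; q) = ∏_{n ≥ 0} (1 - a qⁿ)`, meaningful for `‖q‖ < 1`.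
Euler's product `∏_{n ≥ 1} (1 - qⁿ)` is `qPochhammer q q`. -/
noncomputable def qPochhammer {R : Type*} [CommRing R] [TopologicalSpace R] (a q : R) : R :=
  ∏' n : ℕ, (1 - a * q ^ n)

variable {R : Type*} [NormedCommRing R] [NormOneClass R] [CompleteSpace R] {q : R}

lemma multipliable_one_sub_mul_pow (a : R) (hq : ‖q‖ < 1) :
    Multipliable fun n : ℕ ↦ 1 - a * q ^ n := by
  have summable_terms : Summable fun n : ℕ ↦ ‖-(a * q ^ n)‖ := by
    refine ((summable_geometric_of_lt_one (norm_nonneg q) hq).mul_left ‖a‖).of_nonneg_of_le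
      (fun n ↦ norm_nonneg _) fun n ↦ ?_
    rw [norm_neg]
    exact (norm_mul_le _ _).trans (by gcongr; exact norm_pow_le q n)
  simpa only [sub_eq_add_neg] using multipliable_one_add_of_summable summable_terms

lemma qPochhammer_even_mul_odd (a : R) (hq : ‖q‖ < 1) :
    qPochhammer a (q ^ 2) * qPochhammer (a * q) (q ^ 2) = qPochhammer a q := by
  have hq2 : ‖q ^ 2‖ < 1 :=
    (norm_pow_le q 2).trans_lt (pow_lt_one₀ (norm_nonneg q) hq two_ne_zero)
  have even_term (n : ℕ) : 1 - a * (q ^ 2) ^ n = 1 - a * q ^ (2 * n) := by rw [pow_mul]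
  have odd_term (n : ℕ) : 1 - a * q * (q ^ 2) ^ n = 1 - a * q ^ (2 * n + 1) := by ring
  have even_multipliable := multipliable_one_sub_mul_pow a hq2
  have odd_multipliable := multipliable_one_sub_mul_pow (a * q) hq2
  simp only [even_term] at even_multipliable
  simp only [odd_term] at odd_multipliable
  simp only [qPochhammer, even_term, odd_term]
  exact tprod_even_mul_odd (f := fun n ↦ 1 - a * q ^ n) even_multipliable odd_multipliable

lemma qPochhammer_mul_qPochhammer_neg (a : R) (hq : ‖q‖ < 1) :
    qPochhammer a q * qPochhammer (-a) q = qPochhammer (a ^ 2) (q ^ 2) := by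
  rw [qPochhammer, qPochhammer, ← (multipliable_one_sub_mul_pow a hq).tprod_mul
    (multipliable_one_sub_mul_pow (-a) hq)]
  exact tprod_congr fun n ↦ by ring

lemma qPochhammer_neg_neg_mul (hq : ‖q‖ < 1) :
    qPochhammer (-q) (-q) * (qPochhammer q q * qPochhammer (q ^ 4) (q ^ 4)) =
      qPochhammer (q ^ 2) (q ^ 2) ^ 3 := by
  have hq2 : ‖q ^ 2‖ < 1 :=
    (norm_pow_le q 2).trans_lt (pow_lt_one₀ (norm_nonneg q) hq two_ne_zero)
  have split_q : qPochhammer q (q ^ 2) * qPochhammer (q ^ 2) (q ^ 2) = qPochhammer q q := by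
    simpa only [← sq] using qPochhammer_even_mul_odd q hq
  have split_neg_q :
      qPochhammer (-q) (q ^ 2) * qPochhammer (q ^ 2) (q ^ 2) = qPochhammer (-q) (-q) := by
    simpa only [← sq, neg_sq] using qPochhammer_even_mul_odd (-q) (q := -q) (by rwa [norm_neg])
  have split_q_sq :
      qPochhammer (q ^ 2) (q ^ 4) * qPochhammer (q ^ 4) (q ^ 4) = qPochhammer (q ^ 2) (q ^ 2) := by
    rw [← qPochhammer_even_mul_odd (q ^ 2) hq2, ← pow_add, ← pow_mul]
  have odd_parts :
      qPochhammer q (q ^ 2) * qPochhammer (-q) (q ^ 2) = qPochhammer (q ^ 2) (q ^ 4) := by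
    simpa only [← pow_mul, Nat.reduceMul] using qPochhammer_mul_qPochhammer_neg q hq2
  calc qPochhammer (-q) (-q) * (qPochhammer q q * qPochhammer (q ^ 4) (q ^ 4))
      = qPochhammer q (q ^ 2) * qPochhammer (-q) (q ^ 2) * qPochhammer (q ^ 4) (q ^ 4) *
          qPochhammer (q ^ 2) (q ^ 2) ^ 2 := by rw [← split_q, ← split_neg_q]; ring
    _ = qPochhammer (q ^ 2) (q ^ 2) ^ 3 := by rw [odd_parts, split_q_sq]; ring

end QPochhammer

lemma dedekindEta_eq_eta (τ : ℂ) : dedekindEta τ = ModularForm.eta τ := by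
  simp only [dedekindEta, ModularForm.eta, ModularForm.eta_q_eq_cexp, Function.Periodic.qParam]
  congr 2
  push_cast
  ring

lemma dedekindEta_ne_zero_s11 {τ : ℂ} (hτ : 0 < τ.im) : dedekindEta τ ≠ 0 :=
  dedekindEta_eq_eta τ ▸ ModularForm.eta_ne_zero hτ

lemma dedekindEta_eq_exp_mul_qPochhammer (τ : ℂ) :
    dedekindEta τ = exp (π * I * τ / 12) *
      qPochhammer (exp (2 * π * I * τ)) (exp (2 * π * I * τ)) := by
  simp only [dedekindEta, qPochhammer, ← pow_succ', ← ModularForm.eta_q_eq_cexp,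
    ← ModularForm.eta_q_eq_pow]

lemma dedekindEta_add_one (τ : ℂ) :
    dedekindEta (τ + 1) = exp (π * I / 12) * dedekindEta τ := by
  have exp_periodic : exp (2 * π * I * (τ + 1)) = exp (2 * π * I * τ) := by
    rw [mul_add_one, exp_add, exp_two_pi_mul_I, mul_one]
  rw [dedekindEta_eq_exp_mul_qPochhammer, dedekindEta_eq_exp_mul_qPochhammer, exp_periodic,
    ← mul_assoc, ← exp_add]
  ring_nf

lemma dedekindEta_add_nat (τ : ℂ) (n : ℕ) :
    dedekindEta (τ + n) = exp (π * I * n / 12) * dedekindEta τ := by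
  induction n with
  | zero => simp
  | succ n ih =>
    rw [Nat.cast_succ, ← add_assoc, dedekindEta_add_one, ih, ← mul_assoc, ← exp_add]
    ring_nf

lemma dedekindEta_nat_mul_div_add_one (m n : ℕ) (τ : ℂ) :
    dedekindEta (m * (τ + 1)) / dedekindEta (n * (τ + 1)) =
      exp (π * I * (m - n) / 12) * (dedekindEta (m * τ) / dedekindEta (n * τ)) := by
  rw [mul_add_one, mul_add_one, dedekindEta_add_nat, dedekindEta_add_nat, mul_div_mul_comm,
    ← exp_sub]
  ring_nf

lemma norm_exp_pi_mul_I_mul_lt_one {τ : ℂ} (hτ : 0 < τ.im) : ‖exp (π * I * τ)‖ < 1 := by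
  simpa [norm_exp] using mul_pos Real.pi_pos hτ

lemma dedekindEta_add_one_div_two_mul {τ : ℂ} (hτ : 0 < τ.im) :
    dedekindEta ((τ + 1) / 2) * (dedekindEta (τ / 2) * dedekindEta (2 * τ)) =
      exp (π * I / 24) * dedekindEta τ ^ 3 := by
  set q := exp (π * I * τ) with q_def
  have nome_half_add_one : exp (2 * π * I * ((τ + 1) / 2)) = -q := by
    rw [q_def, ← neg_one_mul, ← exp_pi_mul_I, ← exp_add]
    ring_nf
  have nome_half : exp (2 * π * I * (τ / 2)) = q := by
    rw [q_def]
    ring_nf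
  have nome_self : exp (2 * π * I * τ) = q ^ 2 := by
    rw [q_def, ← exp_nat_mul]
    push_cast
    ring_nf
  have nome_double : exp (2 * π * I * (2 * τ)) = q ^ 4 := by
    rw [q_def, ← exp_nat_mul]
    push_cast
    ring_nf
  have prefactors :
      exp (π * I * ((τ + 1) / 2) / 12) *
          (exp (π * I * (τ / 2) / 12) * exp (π * I * (2 * τ) / 12)) =
        exp (π * I / 24) * exp (π * I * τ / 12) ^ 3 := by
    simp only [← exp_nat_mul, ← exp_add]
    push_cast
    ring_nf
  simp only [dedekindEta_eq_exp_mul_qPochhammer, nome_half_add_one, nome_half, nome_self,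
    nome_double]
  linear_combination
    qPochhammer (-q) (-q) * (qPochhammer q q * qPochhammer (q ^ 4) (q ^ 4)) * prefactors +
      exp (π * I / 24) * exp (π * I * τ / 12) ^ 3 *
        qPochhammer_neg_neg_mul (norm_exp_pi_mul_I_mul_lt_one hτ)

lemma dedekindEta_add_one_div_two {τ : ℂ} (hτ : 0 < τ.im) :
    dedekindEta ((τ + 1) / 2) =
      exp (π * I / 24) * dedekindEta τ ^ 3 / (dedekindEta (τ / 2) * dedekindEta (2 * τ)) := by
  have eta_half_ne_zero : dedekindEta (τ / 2) ≠ 0 := dedekindEta_ne_zero_s11 (by simpa using hτ)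
  have eta_double_ne_zero : dedekindEta (2 * τ) ≠ 0 := dedekindEta_ne_zero_s11 (by simpa using hτ)
  rw [eq_div_iff (mul_ne_zero eta_half_ne_zero eta_double_ne_zero),
    dedekindEta_add_one_div_two_mul hτ]

lemma phi1_add_one {τ : ℂ} (hτ : 0 < τ.im) :
    phi1 (τ + 1) = exp (-π * I / 12) / (phi1 τ * phi2 τ) := by
  have eta_ne_zero : dedekindEta τ ≠ 0 := dedekindEta_ne_zero_s11 hτ
  have root_of_unity : exp (π * I / 24) ^ 2 / exp (π * I / 12) ^ 2 = exp (-π * I / 12) := by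
    rw [← exp_nat_mul, ← exp_nat_mul, ← exp_sub]
    push_cast
    ring_nf
  rw [phi1, phi1, phi2, dedekindEta_add_one_div_two hτ, dedekindEta_add_one, ← root_of_unity]
  field_simp

lemma phi2_add_one (τ : ℂ) : phi2 (τ + 1) = exp (π * I / 6) * phi2 τ := by
  have eta_quotient := dedekindEta_nat_mul_div_add_one 2 1 τ
  have root_of_unity : exp (π * I * (2 - 1) / 12) ^ 2 = exp (π * I / 6) := by
    rw [← exp_nat_mul]
    push_cast
    ring_nf
  simp only [Nat.cast_ofNat, Nat.cast_one, one_mul] at eta_quotient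
  rw [phi2, phi2, ← div_pow, ← div_pow, eta_quotient, mul_pow, root_of_unity]

lemma phi3_add_one {τ : ℂ} (hτ : 0 < τ.im) :
    phi3 (τ + 1) = exp (π * I / 12) * phi5 τ ^ 3 / (phi3 τ * phi4 τ) := by
  have h3τ : 0 < (3 * τ).im := by simpa using hτ
  have eta_three_halves : dedekindEta (3 * (τ + 1) / 2) = exp (π * I / 12) *
      (exp (π * I / 24) * dedekindEta (3 * τ) ^ 3 /
        (dedekindEta (3 * τ / 2) * dedekindEta (6 * τ))) := by
    rw [show 3 * (τ + 1) / 2 = (3 * τ + 1) / 2 + 1 by ring, dedekindEta_add_one,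
      dedekindEta_add_one_div_two h3τ, show 2 * (3 * τ) = 6 * τ by ring]
  rw [phi3, phi3, phi4, phi5, eta_three_halves, dedekindEta_add_one_div_two hτ]
  field_simp

lemma phi4_add_one (τ : ℂ) : phi4 (τ + 1) = exp (π * I / 3) * phi4 τ := by
  have eta_quotient := dedekindEta_nat_mul_div_add_one 6 2 τ
  have exponent : π * I * (6 - 2) / 12 = π * I / 3 := by ring
  simpa only [phi4, Nat.cast_ofNat, exponent] using eta_quotient

lemma phi5_add_one (τ : ℂ) : phi5 (τ + 1) = exp (π * I / 6) * phi5 τ := by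
  have eta_quotient := dedekindEta_nat_mul_div_add_one 3 1 τ
  have exponent : π * I * (3 - 1) / 12 = π * I / 6 := by ring
  simpa only [phi5, Nat.cast_ofNat, Nat.cast_one, one_mul, exponent] using eta_quotient

/-- transformation of the eta quotients under T(τ) = τ + 1. -/
theorem phi_transformation_under_T (τ : ℂ) (hτ : 0 < τ.im) :
    phi1 (τ + 1) = Complex.exp (-(Real.pi : ℂ) * Complex.I / 12) / (phi1 τ * phi2 τ) ∧
    phi2 (τ + 1) = Complex.exp ((Real.pi : ℂ) * Complex.I / 6) * phi2 τ ∧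
    phi3 (τ + 1) = Complex.exp ((Real.pi : ℂ) * Complex.I / 12) * phi5 τ ^ 3
        / (phi3 τ * phi4 τ) ∧
    phi4 (τ + 1) = Complex.exp ((Real.pi : ℂ) * Complex.I / 3) * phi4 τ ∧
    phi5 (τ + 1) = Complex.exp ((Real.pi : ℂ) * Complex.I / 6) * phi5 τ :=
  ⟨phi1_add_one hτ, phi2_add_one τ, phi3_add_one hτ, phi4_add_one τ, phi5_add_one τ⟩
end
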